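/- Let β ∈ [0, 1/2]. In ℂ⁴ with standard orthonormal basis m₀, m₁, m₂, m₃ define the unit vectors E01 = (√(1−(3/2)β)·m₀ + √(β/2)·m₃)/√(1−β), E10 = (√(1−(3/2)β)·m₀ − √(β/2)·m₃)/√(1−β), E00 = (m₁ − i·m₂)/√2, E11 = (m₁ + i·m₂)/√2, and the density matrices σ₀ = (1−β)|E01⟩⟨E01| + β|E00⟩⟨E00| and σ₁ = (1−β)|E10⟩⟨E10| + β|E11⟩⟨E11|. Then the supremum over all binary POVMs (M₀, M₁) on ℂ⁴ of ½(tr(M₀σ₀) + tr(M₁σ₁)) equals ½·(1 + β + √2·√(β(1−(3/2)β))). -/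

import Mathlib

open Matrix ComplexOrder

/-- Rank-one outer product `|v⟩⟨v|`. -/
noncomputable def outerProd (v : Fin 4 → ℂ) : Matrix (Fin 4) (Fin 4) ℂ :=
  Matrix.of fun i j => v i * (starRingEnd ℂ) (v j)

noncomputable def E01v (β : ℝ) : Fin 4 → ℂ :=
  ![((Real.sqrt (1 - 3/2*β) / Real.sqrt (1 - β) : ℝ) : ℂ), 0, 0,
    ((Real.sqrt (β/2) / Real.sqrt (1 - β) : ℝ) : ℂ)]

noncomputable def E10v (β : ℝ) : Fin 4 → ℂ :=
  ![((Real.sqrt (1 - 3/2*β) / Real.sqrt (1 - β) : ℝ) : ℂ), 0, 0,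
    ((-(Real.sqrt (β/2) / Real.sqrt (1 - β)) : ℝ) : ℂ)]

noncomputable def E00v : Fin 4 → ℂ :=
  ![0, (Real.sqrt 2 : ℂ)⁻¹, -Complex.I * (Real.sqrt 2 : ℂ)⁻¹, 0]

noncomputable def E11v : Fin 4 → ℂ :=
  ![0, (Real.sqrt 2 : ℂ)⁻¹, Complex.I * (Real.sqrt 2 : ℂ)⁻¹, 0]

/-- Eve's ancilla state conditioned on Alice's bit `X = 0`. -/
noncomputable def sigma0 (β : ℝ) : Matrix (Fin 4) (Fin 4) ℂ :=
  ((1 - β : ℝ) : ℂ) • outerProd (E01v β) + ((β : ℝ) : ℂ) • outerProd E00v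

/-- Eve's ancilla state conditioned on Alice's bit `X = 1`. -/
noncomputable def sigma1 (β : ℝ) : Matrix (Fin 4) (Fin 4) ℂ :=
  ((1 - β : ℝ) : ℂ) • outerProd (E10v β) + ((β : ℝ) : ℂ) • outerProd E11v

lemma aux_sqrt {β x y : ℝ} (h : 0 < 1 - β) :
    (1-β) * ((x / Real.sqrt (1-β)) * (y / Real.sqrt (1-β))) = x * y := by
  have h1 : Real.sqrt (1-β) ≠ 0 := (Real.sqrt_pos.2 h).ne'
  have h2 := Real.mul_self_sqrt h.le
  field_simp
  rw [pow_two, h2]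
  ring

lemma sqrt2_inv : ((Real.sqrt 2 : ℂ)⁻¹) * ((Real.sqrt 2 : ℂ)⁻¹) = 1/2 := by
  rw [← mul_inv, ← Complex.ofReal_mul, Real.mul_self_sqrt (by norm_num)]
  norm_num

lemma sigma0_eq (β : ℝ) (h0 : 0 ≤ β) (h1 : β ≤ 1/2) :
    sigma0 β = !![((1-3/2*β : ℝ):ℂ), 0, 0, ((Real.sqrt (1-3/2*β) * Real.sqrt (β/2) : ℝ):ℂ);
      0, ((β/2:ℝ):ℂ), ((β/2:ℝ):ℂ) * Complex.I, 0;
      0, -((β/2:ℝ):ℂ) * Complex.I, ((β/2:ℝ):ℂ), 0;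
      ((Real.sqrt (1-3/2*β) * Real.sqrt (β/2) : ℝ):ℂ), 0, 0, ((β/2:ℝ):ℂ)] := by
  have hb : 0 < 1 - β := by linarith
  have e1 := aux_sqrt (x := Real.sqrt (1-3/2*β)) (y := Real.sqrt (1-3/2*β)) hb
  have e2 := aux_sqrt (x := Real.sqrt (1-3/2*β)) (y := Real.sqrt (β/2)) hb
  have e4 := aux_sqrt (x := Real.sqrt (β/2)) (y := Real.sqrt (β/2)) hb
  rw [Real.mul_self_sqrt (by linarith)] at e1 e4
  have s := sqrt2_inv
  rw [← e2]
  unfold sigma0 E01v E00v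
  generalize Real.sqrt (1-3/2*β) / Real.sqrt (1-β) = a at *
  generalize Real.sqrt (β/2) / Real.sqrt (1-β) = b at *
  have f1 := congrArg (fun x : ℝ => (x : ℂ)) e1
  have f4 := congrArg (fun x : ℝ => (x : ℂ)) e4
  push_cast at f1 f4
  have hrs : (starRingEnd ℂ) ((Real.sqrt 2 : ℂ)⁻¹) = (Real.sqrt 2 : ℂ)⁻¹ := by simp
  generalize ((Real.sqrt 2 : ℂ)⁻¹) = r at *
  ext i j
  fin_cases i <;> fin_cases j <;> simp [outerProd, hrs] <;>
    first
    | linear_combination f1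
    | linear_combination f4
    | linear_combination (β : ℂ) * s
    | linear_combination (β : ℂ) * Complex.I * s
    | linear_combination -(β : ℂ) * Complex.I * s
    | linear_combination (β : ℂ) * s - (β : ℂ) * r * r * Complex.I_mul_I
    | exact Or.inl (mul_comm _ _)
    | ring

lemma sigma1_eq (β : ℝ) (h0 : 0 ≤ β) (h1 : β ≤ 1/2) :
    sigma1 β = !![((1-3/2*β : ℝ):ℂ), 0, 0, -((Real.sqrt (1-3/2*β) * Real.sqrt (β/2) : ℝ):ℂ);
      0, ((β/2:ℝ):ℂ), -((β/2:ℝ):ℂ) * Complex.I, 0;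
      0, ((β/2:ℝ):ℂ) * Complex.I, ((β/2:ℝ):ℂ), 0;
      -((Real.sqrt (1-3/2*β) * Real.sqrt (β/2) : ℝ):ℂ), 0, 0, ((β/2:ℝ):ℂ)] := by
  have hb : 0 < 1 - β := by linarith
  have e1 := aux_sqrt (x := Real.sqrt (1-3/2*β)) (y := Real.sqrt (1-3/2*β)) hb
  have e2 := aux_sqrt (x := Real.sqrt (1-3/2*β)) (y := Real.sqrt (β/2)) hb
  have e4 := aux_sqrt (x := Real.sqrt (β/2)) (y := Real.sqrt (β/2)) hb
  rw [Real.mul_self_sqrt (by linarith)] at e1 e4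
  have s := sqrt2_inv
  rw [← e2]
  unfold sigma1 E10v E11v
  generalize Real.sqrt (1-3/2*β) / Real.sqrt (1-β) = a at *
  generalize Real.sqrt (β/2) / Real.sqrt (1-β) = b at *
  have f1 := congrArg (fun x : ℝ => (x : ℂ)) e1
  have f4 := congrArg (fun x : ℝ => (x : ℂ)) e4
  push_cast at f1 f4
  have hrs : (starRingEnd ℂ) ((Real.sqrt 2 : ℂ)⁻¹) = (Real.sqrt 2 : ℂ)⁻¹ := by simp
  generalize ((Real.sqrt 2 : ℂ)⁻¹) = r at *
  ext i j
  fin_cases i <;> fin_cases j <;> simp [outerProd, hrs] <;>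
    first
    | linear_combination f1
    | linear_combination f4
    | linear_combination (β : ℂ) * s
    | linear_combination (β : ℂ) * Complex.I * s
    | linear_combination -(β : ℂ) * Complex.I * s
    | linear_combination (β : ℂ) * s - (β : ℂ) * r * r * Complex.I_mul_I
    | exact Or.inl (mul_comm _ _)
    | ring

lemma c_eq (β : ℝ) (h0 : 0 ≤ β) (h1 : β ≤ 1/2) :
    Real.sqrt 2 * Real.sqrt (β * (1 - 3/2*β)) = 2 * (Real.sqrt (1-3/2*β) * Real.sqrt (β/2)) := by
  rw [← Real.sqrt_mul (by norm_num), ← Real.sqrt_mul (by linarith)]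
  rw [show 2 * (β * (1 - 3/2*β)) = 2^2 * ((1-3/2*β) * (β/2)) by ring, Real.sqrt_mul (by norm_num), Real.sqrt_sq (by norm_num)]

lemma posSemidef_outer (v : Fin 4 → ℂ) : (outerProd v).PosSemidef := by
  have := Matrix.posSemidef_vecMulVec_self_star v
  exact this

/-- **Attack M2 (QKD), min-entropy.** The optimal probability of guessing the
uniformly random bit `X` from Eve's ancilla equals
`(1 + β + √2·√(β(1-(3/2)β)))/2`. -/
theorem stmt14 (β : ℝ) (hβ : β ∈ Set.Icc (0:ℝ) (1/2)) :
    sSup {g : ℝ | ∃ M₀ M₁ : Matrix (Fin 4) (Fin 4) ℂ,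
        M₀.PosSemidef ∧ M₁.PosSemidef ∧ M₀ + M₁ = 1 ∧
        g = ((M₀ * sigma0 β).trace.re + (M₁ * sigma1 β).trace.re) / 2} =
      (1 + β + Real.sqrt 2 * Real.sqrt (β * (1 - 3/2*β))) / 2 := by
  obtain ⟨h0, h1⟩ := hβ
  rw [c_eq β h0 h1, sigma0_eq β h0 h1, sigma1_eq β h0 h1]
  have hc : 0 ≤ Real.sqrt (1-3/2*β) * Real.sqrt (β/2) := by positivity
  generalize Real.sqrt (1-3/2*β) * Real.sqrt (β/2) = c at *
  have s := sqrt2_inv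
  set r : ℂ := (Real.sqrt 2 : ℂ)⁻¹ with hr
  have hrs : (starRingEnd ℂ) r = r := by simp [hr]
  have s' : r ^ 2 = 1/2 := by rw [pow_two, s]
  apply IsGreatest.csSup_eq
  constructor
  · refine ⟨outerProd ![r,0,0,r] + outerProd ![0,r,-Complex.I*r,0],
      outerProd ![r,0,0,-r] + outerProd ![0,r,Complex.I*r,0],
      (posSemidef_outer _).add (posSemidef_outer _),
      (posSemidef_outer _).add (posSemidef_outer _), ?_, ?_⟩
    · ext i j
      fin_cases i <;> fin_cases j <;> simp [outerProd, hrs] <;> ring_nf <;> simp [s']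
    · have t0 : ((outerProd ![r,0,0,r] + outerProd ![0,r,-Complex.I*r,0]) * !![((1-3/2*β : ℝ):ℂ), 0, 0, (c :ℂ);
      0, ((β/2:ℝ):ℂ), ((β/2:ℝ):ℂ) * Complex.I, 0;
      0, -((β/2:ℝ):ℂ) * Complex.I, ((β/2:ℝ):ℂ), 0;
      (c:ℂ), 0, 0, ((β/2:ℝ):ℂ)]).trace = (((1+β+2*c)/2 : ℝ) : ℂ) := by
        simp [outerProd, hrs, Matrix.trace, Matrix.mul_apply, Fin.sum_univ_four]
        ring_nf
        simp only [s', Complex.I_sq]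
        ring
      have t1 : ((outerProd ![r,0,0,-r] + outerProd ![0,r,Complex.I*r,0]) * !![((1-3/2*β : ℝ):ℂ), 0, 0, -(c :ℂ);
      0, ((β/2:ℝ):ℂ), -((β/2:ℝ):ℂ) * Complex.I, 0;
      0, ((β/2:ℝ):ℂ) * Complex.I, ((β/2:ℝ):ℂ), 0;
      -(c:ℂ), 0, 0, ((β/2:ℝ):ℂ)]).trace = (((1+β+2*c)/2 : ℝ) : ℂ) := by
        simp [outerProd, hrs, Matrix.trace, Matrix.mul_apply, Fin.sum_univ_four]
        ring_nf
        simp only [s', Complex.I_sq]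
        ring
      rw [t0, t1, Complex.ofReal_re]; ring
  · rintro g ⟨M, N, hM, hN, hMN, rfl⟩
    obtain rfl : N = 1 - M := by rw [← hMN]; simp
    have a1 := (Complex.le_def.1 (hM.dotProduct_mulVec_nonneg ![1,0,0,-1])).1
    have a2 := (Complex.le_def.1 (hN.dotProduct_mulVec_nonneg ![1,0,0,1])).1
    have a3 := (Complex.le_def.1 (hM.dotProduct_mulVec_nonneg ![0,1,Complex.I,0])).1
    have a4 := (Complex.le_def.1 (hN.dotProduct_mulVec_nonneg ![0,1,-Complex.I,0])).1
    simp [dotProduct, mulVec, Fin.sum_univ_four, Matrix.one_apply] at a1 a2 a3 a4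
    have b1 : (M 0 3).re + (M 3 0).re ≤ 1 := by linarith
    have b2 : (M 2 1).im * (-1) + (M 1 2).im ≤ 1 := by linarith
    simp [Matrix.trace, Matrix.mul_apply, Fin.sum_univ_four, Matrix.one_apply]
    have := mul_le_mul_of_nonneg_left b1 hc
    have := mul_le_mul_of_nonneg_left b2 h0
    linarith
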